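/- Let G = ℤ/2ℤ act on the abelian group A = ℤ/3ℤ × ℤ/3ℤ so that the nontrivial element of G acts by inversion (negation), and let D be the subgroup of Z¹(G, A) consisting of those 1-cocycles whose value at the nontrivial element of G lies in the antidiagonal subgroup {(g, h) ∈ ℤ/3ℤ × ℤ/3ℤ : g + h = 0}. Then the quotient group Z¹(G, A)/D has exactly 3 elements; in particular, since H¹(G, A) is trivial, the quotient Z¹(G, A)/D is not isomorphic to H¹(G, A). -/

import Mathlib

/-- The coefficient group `A = ℤ/3ℤ × ℤ/3ℤ`. -/
abbrev A : Type := ZMod 3 × ZMod 3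

/-- The action of `G = ℤ/2ℤ` on `A` in which the nontrivial element acts by
negation (inversion). -/
def act (g : ZMod 2) (a : A) : A := if g = 0 then a else -a

lemma act_zero (g : ZMod 2) : act g (0 : A) = 0 := by
  unfold act; split_ifs <;> simp

lemma act_add (g : ZMod 2) (a b : A) : act g (a + b) = act g a + act g b := by
  unfold act; split_ifs <;> [rfl; exact neg_add a b]

lemma act_neg (g : ZMod 2) (a : A) : act g (-a) = -act g a := by
  unfold act; split_ifs <;> simp

/-- The group `Z¹(G, A)` of 1-cocycles: functions `ρ : G → A` with
`ρ(g + h) = ρ(g) + g · ρ(h)`. -/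
def Z1 : AddSubgroup (ZMod 2 → A) where
  carrier := {ρ | ∀ g h : ZMod 2, ρ (g + h) = ρ g + act g (ρ h)}
  zero_mem' := by
    intro g h
    simp [act_zero]
  add_mem' := by
    intro ρ σ hρ hσ g h
    simp only [Pi.add_apply, hρ g h, hσ g h, act_add]
    abel
  neg_mem' := by
    intro ρ hρ g h
    simp only [Pi.neg_apply, hρ g h, act_neg]
    abel


/-- The subgroup `B¹(G, A) ≤ Z¹(G, A)` of 1-coboundaries, i.e. cocycles of the
form `g ↦ g · a − a` for some `a ∈ A`. -/
def B1 : AddSubgroup Z1 where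
  carrier := {ρ | ∃ a : A, ∀ g : ZMod 2, (ρ : ZMod 2 → A) g = act g a - a}
  zero_mem' := ⟨0, by intro g; simp [act_zero]⟩
  add_mem' := by
    rintro ρ σ ⟨a, ha⟩ ⟨b, hb⟩
    refine ⟨a + b, fun g => ?_⟩
    have h : ((ρ + σ : Z1) : ZMod 2 → A) g
        = (ρ : ZMod 2 → A) g + (σ : ZMod 2 → A) g := rfl
    rw [h, ha g, hb g, act_add]
    abel
  neg_mem' := by
    rintro ρ ⟨a, ha⟩
    refine ⟨-a, fun g => ?_⟩
    have h : ((-ρ : Z1) : ZMod 2 → A) g = -((ρ : ZMod 2 → A) g) := rfl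
    rw [h, ha g, act_neg]
    abel

/-- The subgroup `D ≤ Z¹(G, A)` of 1-cocycles whose value at the nontrivial
element of `G` lies in the antidiagonal `{(g, h) : g + h = 0}` of `A`. -/
def D : AddSubgroup Z1 where
  carrier := {ρ | ((ρ : ZMod 2 → A) 1).1 + ((ρ : ZMod 2 → A) 1).2 = 0}
  zero_mem' := by
    show ((0 : ZMod 2 → A) 1).1 + ((0 : ZMod 2 → A) 1).2 = 0
    simp
  add_mem' := by
    intro ρ σ hρ hσ
    have h : ((ρ + σ : Z1) : ZMod 2 → A) 1
        = (ρ : ZMod 2 → A) 1 + (σ : ZMod 2 → A) 1 := rfl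
    show (((ρ + σ : Z1) : ZMod 2 → A) 1).1 + (((ρ + σ : Z1) : ZMod 2 → A) 1).2 = 0
    rw [h, Prod.fst_add, Prod.snd_add]
    have hρ' : ((ρ : ZMod 2 → A) 1).1 + ((ρ : ZMod 2 → A) 1).2 = 0 := hρ
    have hσ' : ((σ : ZMod 2 → A) 1).1 + ((σ : ZMod 2 → A) 1).2 = 0 := hσ
    linear_combination hρ' + hσ'
  neg_mem' := by
    intro ρ hρ
    have h : ((-ρ : Z1) : ZMod 2 → A) 1 = -((ρ : ZMod 2 → A) 1) := rfl
    show (((-ρ : Z1) : ZMod 2 → A) 1).1 + (((-ρ : Z1) : ZMod 2 → A) 1).2 = 0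
    rw [h, Prod.fst_neg, Prod.snd_neg]
    have hρ' : ((ρ : ZMod 2 → A) 1).1 + ((ρ : ZMod 2 → A) 1).2 = 0 := hρ
    linear_combination -hρ'

/-- The homomorphism `ρ ↦ ρ(1).1 + ρ(1).2` with kernel `D`. -/
def sumHom : Z1 →+ ZMod 3 where
  toFun ρ := ((ρ : ZMod 2 → A) 1).1 + ((ρ : ZMod 2 → A) 1).2
  map_zero' := by
    show ((0 : ZMod 2 → A) 1).1 + ((0 : ZMod 2 → A) 1).2 = 0
    simp
  map_add' := by
    intro ρ σ
    have h : ((ρ + σ : Z1) : ZMod 2 → A) 1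
        = (ρ : ZMod 2 → A) 1 + (σ : ZMod 2 → A) 1 := rfl
    rw [h, Prod.fst_add, Prod.snd_add]
    ring

lemma sumHom_ker : sumHom.ker = D := by
  ext ρ
  exact Iff.rfl

lemma cocycle_mem (a : A) : (fun g : ZMod 2 => if g = 0 then 0 else a) ∈ Z1 := by
  show ∀ g h : ZMod 2, (if g + h = 0 then (0 : A) else a)
    = (if g = 0 then 0 else a) + act g (if h = 0 then 0 else a)
  revert a
  decide

lemma sumHom_surjective : Function.Surjective sumHom := by
  intro x
  refine ⟨⟨_, cocycle_mem (x, 0)⟩, ?_⟩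
  show (if (1 : ZMod 2) = 0 then (0 : A) else (x, 0)).1
    + (if (1 : ZMod 2) = 0 then (0 : A) else (x, 0)).2 = x
  simp

lemma B1_eq_top : B1 = ⊤ := by
  rw [eq_top_iff]
  rintro ⟨ρ, hρ⟩ -
  have hρ' : ∀ g h : ZMod 2, ρ (g + h) = ρ g + act g (ρ h) := hρ
  refine ⟨ρ 1, ?_⟩
  show ∀ g : ZMod 2, ρ g = act g (ρ 1) - ρ 1
  have h0 : ρ 0 = 0 := by
    have := hρ' 0 0
    simpa [act] using this
  have key : ∀ a : A, a = act 1 a - a := by decide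
  intro g
  fin_cases g
  · show ρ 0 = act 0 (ρ 1) - ρ 1
    simp [h0, act]
  · exact key (ρ 1)

/-- The quotient `Z¹(G, A) / D` has exactly 3 elements; in particular, since
`H¹(G, A) = Z¹(G, A) / B¹(G, A)` is trivial, `Z¹(G, A) / D` is not isomorphic
to `H¹(G, A)`. -/
theorem stmt3 :
    Nat.card (Z1 ⧸ D) = 3 ∧ IsEmpty ((Z1 ⧸ D) ≃+ (Z1 ⧸ B1)) := by
  have hc : Nat.card (Z1 ⧸ D) = 3 := by
    rw [← sumHom_ker, Nat.card_congr
      (QuotientAddGroup.quotientKerEquivOfSurjective sumHom sumHom_surjective).toEquiv]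
    simp
  refine ⟨hc, ⟨fun e => ?_⟩⟩
  have h1 := Nat.card_congr e.toEquiv
  rw [hc, B1_eq_top] at h1
  have : Subsingleton (Z1 ⧸ (⊤ : AddSubgroup Z1)) :=
    QuotientAddGroup.subsingleton_quotient_top
  have h2 := Finite.card_le_one_iff_subsingleton.mpr this
  omega
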